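/- For every integer w ≥ 4, with u = w−2 and v = w−1, the weighted sum formula 2·∑_{a+b+c=w, a,b,c≥1} 2^{b−1} ζ(ā,b̄,c) = 2·ζ(1̄,1̄,ū) + u·ζ(1̄,v̄) + 2·ζ(1̄,v) + ζ(2̄,ū) + ζ(2,ū) + ζ(w̄) holds. -/

import Mathlib

open Filter

/-- Depth-1 Euler sum `ζ(s; e) = ∑_{n ≥ 1} eⁿ / nˢ`,
defined as the limit of partial sums. `e = 1` gives `ζ(s)`, `e = -1` gives `ζ(s̄)`. -/
noncomputable def eulerSum1 (s : ℕ) (e : ℝ) : ℝ :=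
  limUnder atTop (fun N : ℕ =>
    ∑ n ∈ Finset.Icc 1 N, e ^ n / (n : ℝ) ^ s)

/-- Depth-2 Euler sum `ζ(s₁, s₂; e₁, e₂) = ∑_{n₁ > n₂ ≥ 1} e₁^{n₁} e₂^{n₂} / (n₁^{s₁} n₂^{s₂})`,
defined as the limit of iterated partial sums. A bar over an argument means the
corresponding sign is `-1`. -/
noncomputable def eulerSum2 (s₁ s₂ : ℕ) (e₁ e₂ : ℝ) : ℝ :=
  limUnder atTop (fun N : ℕ =>
    ∑ n₁ ∈ Finset.Icc 1 N, ∑ n₂ ∈ Finset.Ico 1 n₁,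
      e₁ ^ n₁ * e₂ ^ n₂ / ((n₁ : ℝ) ^ s₁ * (n₂ : ℝ) ^ s₂))

/-- Depth-3 Euler sum
`ζ(s₁, s₂, s₃; e₁, e₂, e₃) = ∑_{n₁ > n₂ > n₃ ≥ 1} e₁^{n₁} e₂^{n₂} e₃^{n₃} / (n₁^{s₁} n₂^{s₂} n₃^{s₃})`. -/
noncomputable def eulerSum3 (s₁ s₂ s₃ : ℕ) (e₁ e₂ e₃ : ℝ) : ℝ :=
  limUnder atTop (fun N : ℕ =>
    ∑ n₁ ∈ Finset.Icc 1 N, ∑ n₂ ∈ Finset.Ico 1 n₁, ∑ n₃ ∈ Finset.Ico 1 n₂,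
      e₁ ^ n₁ * e₂ ^ n₂ * e₃ ^ n₃ / ((n₁ : ℝ) ^ s₁ * (n₂ : ℝ) ^ s₂ * (n₃ : ℝ) ^ s₃))

/-- Depth-1 multiple T-value `T(s) = 2 ∑_{m odd, m ≥ 1} 1 / mˢ`. -/
noncomputable def tValue1 (s : ℕ) : ℝ :=
  limUnder atTop (fun N : ℕ =>
    ∑ m ∈ Finset.Icc 1 N, if m % 2 = 1 then 2 / (m : ℝ) ^ s else 0)

/-- Depth-2 multiple T-value
`T(s₁, s₂) = ∑_{m₁ > m₂ > 0, m₁ even, m₂ odd} 4 / (m₁^{s₁} m₂^{s₂})`. -/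
noncomputable def tValue2 (s₁ s₂ : ℕ) : ℝ :=
  limUnder atTop (fun N : ℕ =>
    ∑ m₁ ∈ Finset.Icc 1 N, ∑ m₂ ∈ Finset.Ico 1 m₁,
      if m₁ % 2 = 0 ∧ m₂ % 2 = 1 then 4 / ((m₁ : ℝ) ^ s₁ * (m₂ : ℝ) ^ s₂) else 0)

/-- Depth-3 multiple T-value
`T(s₁, s₂, s₃) = ∑_{m₁ > m₂ > m₃ > 0, m₁ odd, m₂ even, m₃ odd} 8 / (m₁^{s₁} m₂^{s₂} m₃^{s₃})`. -/
noncomputable def tValue3 (s₁ s₂ s₃ : ℕ) : ℝ :=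
  limUnder atTop (fun N : ℕ =>
    ∑ m₁ ∈ Finset.Icc 1 N, ∑ m₂ ∈ Finset.Ico 1 m₁, ∑ m₃ ∈ Finset.Ico 1 m₂,
      if m₁ % 2 = 1 ∧ m₂ % 2 = 0 ∧ m₃ % 2 = 1 then
        8 / ((m₁ : ℝ) ^ s₁ * (m₂ : ℝ) ^ s₂ * (m₃ : ℝ) ^ s₃) else 0)

/-!
Write `w = k + 3`. Since `∑ a + b + c = w, 2 ^ (b - 1) / (n₁ ^ a n₂ ^ b m ^ c)` is the coefficient
of `x ^ k` in `1 / ((n₁ - x) (n₂ - 2 x) (m - x))`, adding the terms for `m` and `n₂ - m` turns the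
partial fraction identity `1 / (u - x) * 1 / (v - x) = 1 / (u + v - 2 x) * (1 / (u - x) +
1 / (v - x))` into a removal of the powers of two. Shifting `n₁` and `n₂` down by `m` preserves the
parity of `n₁ + n₂` and makes the sum over `m` telescope, which leaves alternating sums of divided
differences of `n ↦ 1 / n ^ (k + 1)`. The diagonal ones give `(k + 1) ζ(1̄, k+2̄)`. In the others
the coefficient of `(-1) ^ r / r ^ (k + 1)` tends to
`(∑ n ≥ r, (-1) ^ n / n) ^ 2 + ∑ n > r, (-1) ^ n / n ^ 2`, and expanding the square gives the
remaining Euler sums. All sums are truncated at `M`, as they need not converge absolutely; the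
truncation errors reduce to alternating sums of monotone sequences, and are `O(H_M ^ 2 / M)` for the
harmonic numbers `H_M`.
-/

section

open Finset PowerSeries
open scoped Topology

section FiniteSums

theorem sum_Icc_Ioc_comm {R : Type*} [AddCommMonoid R] (a b : ℕ) (f : ℕ → ℕ → R) :
    ∑ i ∈ Icc a b, ∑ j ∈ Ioc i b, f i j = ∑ j ∈ Icc a b, ∑ i ∈ Ico a j, f i j := by
  simpa only [Ico_add_one_right_eq_Icc, Icc_add_one_left_eq_Ioc] using
    sum_Ico_Ico_comm' a (b + 1) f

theorem sum_Icc_Icc_comm {R : Type*} [AddCommMonoid R] (a b : ℕ) (f : ℕ → ℕ → R) :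
    ∑ i ∈ Icc a b, ∑ j ∈ Icc i b, f i j = ∑ j ∈ Icc a b, ∑ i ∈ Icc a j, f i j := by
  simpa only [Ico_add_one_right_eq_Icc] using sum_Ico_Ico_comm a (b + 1) f

theorem sum_Ico_one_reflect {R : Type*} [AddCommMonoid R] (f : ℕ → R) (n : ℕ) :
    ∑ j ∈ Ico 1 n, f (n - j) = ∑ j ∈ Ico 1 n, f j := by
  simpa using sum_Ico_reflect f 1 n.le_succ

theorem sum_Ioc_eq_sum_Icc_one {R : Type*} [AddCommMonoid R] (f : ℕ → R) (s M : ℕ) :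
    ∑ n ∈ Ioc s M, f n = ∑ j ∈ Icc 1 (M - s), f (s + j) :=
  sum_nbij' (· - s) (s + ·) (by simp; lia) (by simp; lia) (by simp; lia) (by simp)
    fun n hn => by rw [Nat.add_sub_of_le (mem_Ioc.mp hn).1.le]

theorem sum_Ioc_Ico_sub {R : Type*} [AddCommMonoid R] (s M : ℕ) (f : ℕ → ℕ → R) :
    ∑ n ∈ Ioc s M, ∑ j ∈ Ico 1 (n - s), f (n - j) j =
      ∑ p ∈ Ioc s M, ∑ j ∈ Icc 1 (M - p), f p j := by
  simp only [sum_sigma']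
  exact sum_bij' (fun x _ => ⟨x.1 - x.2, x.2⟩) (fun y _ => ⟨y.1 + y.2, y.2⟩)
    (by simp; lia) (by simp; lia) (by rintro ⟨n, j⟩; simp; lia) (by simp) (by simp)

theorem sum_Icc_one_sub_shift {R : Type*} [AddCommGroup R] (f : ℕ → R) {N M : ℕ} (h : N ≤ M) :
    ∑ n ∈ Icc 1 (M - N), (f n - f (N + n)) = ∑ n ∈ Icc 1 N, f n - ∑ n ∈ Ioc (M - N) M, f n := by
  have hIcc (L : ℕ) : Icc 1 L = Ioc 0 L := Icc_add_one_left_eq_Ioc 0 L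
  rw [sum_sub_distrib, ← sum_Ioc_eq_sum_Icc_one, sub_eq_sub_iff_add_eq_add, hIcc, hIcc,
    sum_Ioc_consecutive f (Nat.zero_le _) (Nat.sub_le M N),
    sum_Ioc_consecutive f (Nat.zero_le _) h]

theorem sum_sum_sum_rotate {ι α β R : Type*} [AddCommMonoid R] (s : Finset ι) (A : Finset α)
    (B : α → Finset β) (f : ι → α → β → R) :
    ∑ i ∈ s, ∑ a ∈ A, ∑ b ∈ B a, f i a b = ∑ a ∈ A, ∑ b ∈ B a, ∑ i ∈ s, f i a b := by
  rw [sum_comm]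
  exact sum_congr rfl fun a _ => sum_comm

theorem sum_Icc_Icc_one_eq_sum_antidiagonal {R : Type*} [AddCommMonoid R] (f : ℕ → ℕ → ℕ → R)
    (k : ℕ) :
    ∑ a ∈ Icc 1 (k + 1), ∑ b ∈ Icc 1 (k + 3 - a - 1), f a b (k + 3 - a - b) =
      ∑ p ∈ antidiagonal k, ∑ q ∈ antidiagonal p.2, f (p.1 + 1) (q.1 + 1) (q.2 + 1) := by
  simp only [Nat.sum_antidiagonal_eq_sum_range_succ_mk, ← Ico_add_one_right_eq_Icc,
    sum_Ico_eq_sum_range]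
  refine sum_congr rfl fun a ha => ?_
  have ha := mem_range.mp ha
  refine sum_congr (by congr 1; lia) fun b hb => ?_
  have hb := mem_range.mp hb
  congr 1 <;> lia

theorem sq_sum_Ioc {R : Type*} [CommRing R] (f : ℕ → R) (s M : ℕ) :
    (∑ n ∈ Ioc s M, f n) ^ 2 =
      ∑ n ∈ Ioc s M, f n ^ 2 + 2 * ∑ n ∈ Ioc s M, ∑ m ∈ Ioo s n, f n * f m := by
  rcases lt_or_ge M s with h | h
  · simp [Ioc_eq_empty_of_le h.le]
  induction M, h using Nat.le_induction with
  | base => simp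
  | succ M hM ih =>
    have hIoo : Ioo s (M + 1) = Ioc s M := Ioo_add_one_right_eq_Ioc s M
    simp only [sum_Ioc_succ_top hM, hIoo, ← mul_sum] at ih ⊢
    linear_combination ih

end FiniteSums

section PoleSeries

variable {K : Type*} [Field K]

/-- The power series expansion of `1 / (u - t X)`; it is the zero series, a junk value, at `u = 0`,
so that it may be summed over all natural numbers `u`. -/
noncomputable def poleSeries (t u : K) : K⟦X⟧ :=
  mk fun k => t ^ k / u ^ (k + 1)

theorem sub_mul_poleSeries (t : K) {u : K} (hu : u ≠ 0) :
    (C u - C t * X) * poleSeries t u = 1 := by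
  ext k
  rw [sub_mul, mul_assoc, map_sub, coeff_C_mul, coeff_C_mul]
  cases k with
  | zero => simp [poleSeries, hu]
  | succ k =>
    rw [coeff_succ_X_mul, coeff_one, if_neg k.succ_ne_zero]
    simp only [poleSeries, coeff_mk]
    field_simp
    ring

theorem poleSeries_mul_poleSeries (s t : K) {u v : K} (hu : u ≠ 0) (hv : v ≠ 0) (huv : u + v ≠ 0) :
    poleSeries s u * poleSeries t v =
      poleSeries (s + t) (u + v) * (poleSeries s u + poleSeries t v) := by
  have hsum := sub_mul_poleSeries (s + t) huv
  simp only [map_add] at hsum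
  linear_combination (-poleSeries s u * poleSeries t v) * hsum
    + poleSeries (s + t) (u + v) * poleSeries t v * sub_mul_poleSeries s hu
    + poleSeries (s + t) (u + v) * poleSeries s u * sub_mul_poleSeries t hv

theorem poleSeries_sub_poleSeries (t : K) {u v : K} (hu : u ≠ 0) (hv : v ≠ 0) :
    poleSeries t u - poleSeries t v = C (v - u) * (poleSeries t u * poleSeries t v) := by
  rw [map_sub]
  linear_combination poleSeries t v * sub_mul_poleSeries t hu
    - poleSeries t u * sub_mul_poleSeries t hv

/-- The coefficient of `x ^ k` in `1 / ((u - x) (v - x))`. -/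
noncomputable def pairCoeff (k : ℕ) (u v : K) : K :=
  coeff k (poleSeries 1 u * poleSeries 1 v)

theorem pairCoeff_eq_sum (k : ℕ) (u v : K) :
    pairCoeff k u v = ∑ p ∈ antidiagonal k, 1 / (u ^ (p.1 + 1) * v ^ (p.2 + 1)) := by
  simp [pairCoeff, coeff_mul, poleSeries, mul_comm]

theorem pairCoeff_self (k : ℕ) (u : K) : pairCoeff k u u = (k + 1) / u ^ (k + 2) := by
  have hterm : ∀ p ∈ antidiagonal k, 1 / (u ^ (p.1 + 1) * u ^ (p.2 + 1)) = 1 / u ^ (k + 2) := by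
    intro p hp
    rw [← pow_add, ← mem_antidiagonal.mp hp, add_add_add_comm]
  rw [pairCoeff_eq_sum, sum_congr rfl hterm]
  simp [div_eq_mul_inv]

theorem pairCoeff_of_ne (k : ℕ) {u v : K} (hu : u ≠ 0) (hv : v ≠ 0) (huv : u ≠ v) :
    pairCoeff k u v = (1 / u ^ (k + 1) - 1 / v ^ (k + 1)) / (v - u) := by
  have h := congrArg (coeff k) (poleSeries_sub_poleSeries 1 hu hv)
  rw [coeff_C_mul, map_sub] at h
  rw [eq_div_iff (sub_ne_zero.mpr huv.symm), mul_comm, pairCoeff, ← h]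
  simp [poleSeries]

/-- The coefficient of `x ^ k` in `1 / ((u - x) (v - t x) (w - x))`. -/
noncomputable def tripleCoeff (t : K) (k : ℕ) (u v w : K) : K :=
  coeff k (poleSeries 1 u * (poleSeries t v * poleSeries 1 w))

theorem tripleCoeff_eq_sum (t : K) (k : ℕ) (u v w : K) :
    tripleCoeff t k u v w = ∑ p ∈ antidiagonal k, ∑ q ∈ antidiagonal p.2,
      t ^ q.1 / (u ^ (p.1 + 1) * v ^ (q.1 + 1) * w ^ (q.2 + 1)) := by
  simp only [tripleCoeff, coeff_mul, poleSeries, coeff_mk, one_pow, mul_sum, div_mul_div_comm,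
    one_mul, mul_one, mul_assoc]

theorem tripleCoeff_two_add_tripleCoeff_two (k : ℕ) (u : K) {v w : K} (hv : v ≠ 0) (hw : w ≠ 0)
    (hvw : v + w ≠ 0) :
    tripleCoeff 2 k u (v + w) v + tripleCoeff 2 k u (v + w) w = tripleCoeff 1 k u v w := by
  rw [tripleCoeff, tripleCoeff, tripleCoeff, poleSeries_mul_poleSeries 1 1 hv hw hvw,
    one_add_one_eq_two, mul_add, mul_add, map_add]

theorem mul_tripleCoeff_one_add (k : ℕ) (v : K) {u w : K} (hw : w ≠ 0) (huw : u + w ≠ 0) :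
    u * tripleCoeff 1 k (u + w) v w = pairCoeff k v w - pairCoeff k v (u + w) := by
  rw [pairCoeff, pairCoeff, ← map_sub, ← mul_sub, poleSeries_sub_poleSeries 1 hw huw,
    add_sub_cancel_right, tripleCoeff, ← coeff_C_mul]
  congr 1
  ring

end PoleSeries

section PairCoeffBounds

theorem pairCoeff_nonneg (k : ℕ) {u v : ℝ} (hu : 0 ≤ u) (hv : 0 ≤ v) : 0 ≤ pairCoeff k u v := by
  rw [pairCoeff_eq_sum]
  positivity

theorem pairCoeff_antitoneOn (k : ℕ) {u : ℝ} (hu : 0 ≤ u) :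
    AntitoneOn (pairCoeff k u) (Set.Ioi 0) := by
  intro v hv v' hv' h
  rw [Set.mem_Ioi] at hv hv'
  rcases hu.eq_or_lt with rfl | hu
  · simp [pairCoeff_eq_sum]
  simp only [pairCoeff_eq_sum]
  gcongr

theorem pairCoeff_le (k : ℕ) {u v : ℝ} (hu : 1 ≤ u) (hv : 1 ≤ v) :
    pairCoeff k u v ≤ (k + 1) * (1 / u * (1 / v)) := by
  have hterm : ∀ p ∈ antidiagonal k, 1 / (u ^ (p.1 + 1) * v ^ (p.2 + 1)) ≤ 1 / u * (1 / v) := by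
    intro p _
    rw [one_div_mul_one_div]
    gcongr <;> exact le_self_pow₀ ‹_› (Nat.succ_ne_zero _)
  rw [pairCoeff_eq_sum]
  simpa using sum_le_card_nsmul _ _ _ hterm

end PairCoeffBounds

section SignedHarmonic

/-- The partial sum `∑ j ≤ n, e ^ j / j`: the harmonic number `H_n` for `e = 1` and its alternating
analogue for `e = -1`. -/
noncomputable def signedHarmonic (e : ℝ) (n : ℕ) : ℝ :=
  ∑ j ∈ Icc 1 n, e ^ j / j

theorem signedHarmonic_succ (e : ℝ) (n : ℕ) :
    signedHarmonic e (n + 1) = signedHarmonic e n + e ^ (n + 1) / (n + 1 : ℕ) :=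
  sum_Icc_succ_top (Nat.le_add_left 1 n) _

theorem sum_Ioc_pow_div (e : ℝ) {m M : ℕ} (h : m ≤ M) :
    ∑ n ∈ Ioc m M, e ^ n / n = signedHarmonic e M - signedHarmonic e m :=
  eq_sub_of_add_eq' (sum_Ioc_consecutive (fun n : ℕ => e ^ n / (n : ℝ)) m.zero_le h)

theorem sum_Ico_one_pow_div_sub {e : ℝ} (he : e * e = 1) (r : ℕ) :
    ∑ n ∈ Ico 1 r, e ^ n / ((n : ℝ) - r) = -(e ^ r * signedHarmonic e (r - 1)) := by
  rcases r.eq_zero_or_pos with rfl | hr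
  · simp [signedHarmonic]
  rw [← sum_Ico_one_reflect, signedHarmonic, ← Ico_add_one_right_eq_Icc,
    show r - 1 + 1 = r from Nat.sub_add_cancel hr, mul_sum, ← sum_neg_distrib]
  refine sum_congr rfl fun j hj => ?_
  have hjr := (mem_Ico.mp hj).2.le
  have hpow : e ^ r * e ^ j = e ^ (r - j) := by
    rw [← Nat.sub_add_cancel hjr, pow_add, mul_assoc, ← mul_pow, he, Nat.add_sub_cancel]
    simp
  rw [Nat.cast_sub hjr, sub_sub_cancel_left, mul_div_assoc', hpow, div_neg]

theorem sum_Ico_pow_div_sub (e : ℝ) (r N : ℕ) :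
    ∑ n ∈ Ico r N, e ^ n / ((n : ℝ) - r) = e ^ r * signedHarmonic e (N - 1 - r) := by
  rcases le_or_gt N r with h | h
  · simp [signedHarmonic, h, show N - 1 - r = 0 by lia]
  rw [sum_eq_sum_Ico_succ_bot h, sub_self, div_zero, zero_add, signedHarmonic, mul_sum]
  rw [show Ico (r + 1) N = Ioc r (N - 1) by ext; simp; lia, sum_Ioc_eq_sum_Icc_one]
  exact sum_congr rfl fun j _ => by
    rw [Nat.cast_add, add_sub_cancel_left, pow_add, mul_div_assoc]

/-- The term `n = r` contributes `0`, by the convention `x / 0 = 0`. -/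
theorem sum_pow_div_sub {e : ℝ} (he : e * e = 1) {r N : ℕ} (hr : 1 ≤ r) (hN : r ≤ N) :
    ∑ n ∈ Ico 1 N, e ^ n / ((n : ℝ) - r) =
      e ^ r * (signedHarmonic e (N - 1 - r) - signedHarmonic e (r - 1)) := by
  rw [← sum_Ico_consecutive _ hr hN, sum_Ico_one_pow_div_sub he, sum_Ico_pow_div_sub]
  ring

theorem signedHarmonic_one (n : ℕ) : signedHarmonic 1 n = ∑ j ∈ Icc 1 n, 1 / (j : ℝ) := by
  simp only [signedHarmonic, one_pow]

theorem signedHarmonic_one_nonneg (n : ℕ) : 0 ≤ signedHarmonic 1 n := by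
  rw [signedHarmonic_one]
  positivity

theorem signedHarmonic_one_mono : Monotone (signedHarmonic 1) := by
  intro m n h
  rw [signedHarmonic_one, signedHarmonic_one]
  exact sum_le_sum_of_subset_of_nonneg (Icc_subset_Icc_right h) fun _ _ _ => by positivity

theorem one_le_signedHarmonic_one {n : ℕ} (hn : 1 ≤ n) : 1 ≤ signedHarmonic 1 n := by
  simpa [signedHarmonic] using signedHarmonic_one_mono hn

theorem signedHarmonic_one_sq_le {n : ℕ} (hn : 1 ≤ n) :
    signedHarmonic 1 n ^ 2 ≤ 25 * (n : ℝ) ^ (1 / 2 : ℝ) := by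
  have hn1 : (1 : ℝ) ≤ n := by exact_mod_cast hn
  have hharmonic : signedHarmonic 1 n = (harmonic n : ℝ) := by
    simp [harmonic_eq_sum_Icc, signedHarmonic]
  have hle : signedHarmonic 1 n ≤ 5 * (n : ℝ) ^ (1 / 4 : ℝ) := by
    have hlog := Real.log_le_rpow_div n.cast_nonneg (show (0 : ℝ) < 1 / 4 by norm_num)
    have hone := Real.one_le_rpow hn1 (show (0 : ℝ) ≤ 1 / 4 by norm_num)
    linarith [harmonic_le_one_add_log n]
  calc signedHarmonic 1 n ^ 2 ≤ (5 * (n : ℝ) ^ (1 / 4 : ℝ)) ^ 2 :=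
        pow_le_pow_left₀ (signedHarmonic_one_nonneg n) hle 2
    _ = 25 * (n : ℝ) ^ (1 / 2 : ℝ) := by
        rw [mul_pow, ← Real.rpow_natCast ((n : ℝ) ^ _), ← Real.rpow_mul n.cast_nonneg]
        norm_num

theorem tendsto_signedHarmonic_one_sq_div :
    Tendsto (fun n : ℕ => signedHarmonic 1 n ^ 2 / n) atTop (𝓝 0) := by
  have hlim : Tendsto (fun n : ℕ => 25 * (n : ℝ) ^ (-(1 / 2) : ℝ)) atTop (𝓝 0) := by
    simpa using ((tendsto_rpow_neg_atTop (show (0 : ℝ) < 1 / 2 by norm_num)).comp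
      tendsto_natCast_atTop_atTop).const_mul 25
  refine squeeze_zero' (Eventually.of_forall fun n => by positivity) ?_ hlim
  filter_upwards [eventually_ge_atTop 1] with n hn
  have hn0 : (0 : ℝ) < n := by exact_mod_cast hn
  rw [div_le_iff₀ hn0, mul_assoc, ← Real.rpow_add_one hn0.ne',
    show -(1 / 2 : ℝ) + 1 = 1 / 2 by norm_num]
  exact signedHarmonic_one_sq_le hn

theorem summable_signedHarmonic_one_sq_div_sq :
    Summable (fun n : ℕ => signedHarmonic 1 n ^ 2 / (n : ℝ) ^ 2) := by
  have hsum : Summable (fun n : ℕ => 25 * (n : ℝ) ^ (-(3 / 2) : ℝ)) :=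
    (Real.summable_nat_rpow.mpr (by norm_num)).mul_left 25
  refine hsum.of_nonneg_of_le (fun n => by positivity) fun n => ?_
  rcases n.eq_zero_or_pos with rfl | hn
  · simp
  have hn0 : (0 : ℝ) < n := by exact_mod_cast hn
  rw [div_le_iff₀ (by positivity), mul_assoc, ← Real.rpow_natCast (n : ℝ), ← Real.rpow_add hn0,
    show -(3 / 2 : ℝ) + (2 : ℕ) = 1 / 2 by norm_num]
  exact signedHarmonic_one_sq_le hn

end SignedHarmonic

section AlternatingSums

theorem neg_one_pow_mul_alternating_sum_mem_Icc {d : ℕ → ℝ} {s M : ℕ}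
    (hd : ∀ n ∈ Set.Ioc s M, 0 ≤ d n) (hmono : MonotoneOn d (Set.Ioc s M)) (h : s < M) :
    (-1) ^ M * ∑ n ∈ Ioc s M, (-1) ^ n * d n ∈ Set.Icc 0 (d M) := by
  induction M, h using Nat.le_induction with
  | base => simpa [← mul_assoc, ← mul_pow] using hd (s + 1) (by simp)
  | succ M hM ih =>
    have hsub : Set.Ioc s M ⊆ Set.Ioc s (M + 1) := Set.Ioc_subset_Ioc_right M.le_succ
    have hstep := hmono ⟨hM, M.le_succ⟩ ⟨hM.trans M.le_succ, le_rfl⟩ M.le_succ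
    obtain ⟨hlo, hhi⟩ := ih (fun n hn => hd n (hsub hn)) (hmono.mono hsub)
    have hsq : ((-1 : ℝ) ^ (M + 1)) * (-1) ^ (M + 1) = 1 := by simp [← mul_pow]
    rw [sum_Ioc_succ_top (Nat.le_of_succ_le hM), mul_add, ← mul_assoc, hsq, pow_succ]
    constructor <;> linarith

theorem abs_alternating_sum_le_of_monotoneOn {d : ℕ → ℝ} {s M : ℕ}
    (hd : ∀ n ∈ Set.Ioc s M, 0 ≤ d n) (hmono : MonotoneOn d (Set.Ioc s M)) (h : s < M) :
    |∑ n ∈ Ioc s M, (-1) ^ n * d n| ≤ d M := by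
  have hmem := neg_one_pow_mul_alternating_sum_mem_Icc hd hmono h
  simpa [abs_mul] using (abs_of_nonneg hmem.1).trans_le hmem.2

theorem abs_alternating_sum_le_of_antitoneOn {d : ℕ → ℝ} {s M : ℕ}
    (hd : ∀ n ∈ Set.Ioc s M, 0 ≤ d n) (hanti : AntitoneOn d (Set.Ioc s M)) (h : s < M) :
    |∑ n ∈ Ioc s M, (-1) ^ n * d n| ≤ d (s + 1) := by
  have hreflect : ∑ n ∈ Ioc s M, (-1) ^ n * d n =
      (-1) ^ (s + M + 1) * ∑ n ∈ Ioc s M, (-1) ^ n * d (s + M + 1 - n) := by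
    rw [mul_sum]
    refine sum_nbij' (s + M + 1 - ·) (s + M + 1 - ·) (by simp; lia) (by simp; lia)
      (by simp; lia) (by simp; lia) fun n hn => ?_
    have hn' : n ≤ s + M + 1 := by simp at hn; lia
    rw [Nat.sub_sub_self hn', ← mul_assoc, ← pow_add,
      show s + M + 1 + (s + M + 1 - n) = n + 2 * (s + M + 1 - n) by lia, pow_add, pow_mul]
    simp
  have hmem {n : ℕ} (hn : n ∈ Set.Ioc s M) : s + M + 1 - n ∈ Set.Ioc s M := by
    simp at hn ⊢; lia
  have hbound := abs_alternating_sum_le_of_monotoneOn (d := fun n => d (s + M + 1 - n))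
    (fun n hn => hd _ (hmem hn))
    (fun m hm n hn hmn => hanti (hmem hn) (hmem hm) (Nat.sub_le_sub_left hmn _)) h
  rw [hreflect, abs_mul, abs_pow, abs_neg, abs_one, one_pow, one_mul]
  simpa [show s + M + 1 - M = s + 1 by lia] using hbound

theorem monotoneOn_tail_average {φ : ℕ → ℝ} (hanti : AntitoneOn φ (Set.Ici 1)) (M : ℕ) :
    MonotoneOn (fun N : ℕ => (∑ n ∈ Ioc (M - N) M, φ n) / N) (Set.Icc 1 M) := by
  refine monotoneOn_of_le_add_one Set.ordConnected_Icc fun N _ hN hN' => ?_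
  have hNM : N < M := hN'.2
  have hN0 : (0 : ℝ) < N := by exact_mod_cast hN.1
  have hsplit : ∑ n ∈ Ioc (M - (N + 1)) M, φ n = φ (M - N) + ∑ n ∈ Ioc (M - N) M, φ n := by
    rw [add_sum_Ioc_eq_sum_Icc (Nat.sub_le M N), show M - N = M - (N + 1) + 1 by lia,
      Icc_add_one_left_eq_Ioc]
  have hbound : ∑ n ∈ Ioc (M - N) M, φ n ≤ N * φ (M - N) := by
    have hle : ∀ n ∈ Ioc (M - N) M, φ n ≤ φ (M - N) := fun n hn =>
      hanti (by simp; lia) (by simp at hn ⊢; lia) (mem_Ioc.mp hn).1.le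
    simpa [Nat.sub_sub_self hNM.le] using sum_le_card_nsmul _ _ _ hle
  rw [hsplit, Nat.cast_add_one, div_le_div_iff₀ hN0 (by positivity)]
  linarith

theorem abs_alternating_sum_tail_average_le {φ : ℕ → ℝ} (hφ : ∀ n, 0 ≤ φ n)
    (hanti : AntitoneOn φ (Set.Ici 1)) (s M : ℕ) :
    |∑ N ∈ Ioc s M, (-1) ^ N * ((∑ n ∈ Ioc (M - N) M, φ n) / N)| ≤
      (∑ n ∈ Icc 1 M, φ n) / M := by
  have hnonneg (N : ℕ) : 0 ≤ (∑ n ∈ Ioc (M - N) M, φ n) / (N : ℝ) :=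
    div_nonneg (sum_nonneg fun n _ => hφ n) N.cast_nonneg
  have hlast : ∑ n ∈ Icc 1 M, φ n = ∑ n ∈ Ioc (M - M) M, φ n := by
    rw [Nat.sub_self, ← Icc_add_one_left_eq_Ioc, zero_add]
  rw [hlast]
  rcases lt_or_ge s M with h | h
  · refine abs_alternating_sum_le_of_monotoneOn (fun N _ => hnonneg N)
      ((monotoneOn_tail_average hanti M).mono fun N hN => ?_) h
    exact ⟨Nat.one_le_of_lt hN.1, hN.2⟩
  · simpa [Ioc_eq_empty_of_le h] using hnonneg M

end AlternatingSums

section PartialFractions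

theorem two_mul_sum_tripleCoeff_two (k : ℕ) (u : ℝ) (n : ℕ) :
    2 * ∑ m ∈ Ico 1 n, tripleCoeff 2 k u n m =
      ∑ m ∈ Ico 1 n, tripleCoeff 1 k u (n - m : ℕ) m := by
  rw [two_mul]
  nth_rw 1 [← sum_Ico_one_reflect]
  rw [← sum_add_distrib]
  refine sum_congr rfl fun m hm => ?_
  obtain ⟨hm1, hmn⟩ := mem_Ico.mp hm
  have hm0 : (m : ℝ) ≠ 0 := by positivity
  have hnm0 : ((n - m : ℕ) : ℝ) ≠ 0 := Nat.cast_ne_zero.mpr (Nat.sub_pos_of_lt hmn).ne'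
  have hsum : ((n - m : ℕ) : ℝ) + m = n := by exact_mod_cast Nat.sub_add_cancel hmn.le
  have hn0 : (n : ℝ) ≠ 0 := Nat.cast_ne_zero.mpr (Nat.zero_lt_of_lt hmn).ne'
  rw [← tripleCoeff_two_add_tripleCoeff_two k u hnm0 hm0 (by rwa [hsum]), hsum]

theorem sum_alternating_tripleCoeff_one (k M : ℕ) :
    ∑ n₁ ∈ Icc 1 M, ∑ n₂ ∈ Ico 1 n₁, ∑ n ∈ Ico 1 n₂,
        (-1) ^ (n₁ + n₂) * tripleCoeff 1 k (n₁ : ℝ) (n₂ - n : ℕ) n =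
      ∑ N ∈ Icc 1 M, ∑ m ∈ Ico 1 N, ∑ n ∈ Icc 1 (M - N),
        (-1) ^ (N + m) * tripleCoeff 1 k (N + n : ℝ) m n := by
  simp only [sum_sigma']
  refine sum_bij' (fun x _ => ⟨x.1 - x.2.2, x.2.1 - x.2.2, x.2.2⟩)
    (fun y _ => ⟨y.1 + y.2.2, y.2.1 + y.2.2, y.2.2⟩) (by simp; lia) (by simp; lia)
    (by rintro ⟨n₁, n₂, n⟩; simp; lia) (by simp) ?_
  rintro ⟨n₁, n₂, n⟩ hx
  simp only [mem_sigma, mem_Icc, mem_Ico] at hx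
  have hparity : n₁ + n₂ = n₁ - n + (n₂ - n) + 2 * n := by lia
  have hadd : ((n₁ - n : ℕ) : ℝ) + n = n₁ := by exact_mod_cast Nat.sub_add_cancel (by lia)
  rw [hadd, hparity, pow_add, pow_mul, neg_one_sq, one_pow, mul_one]

theorem sum_tripleCoeff_one_eq_sub (k m : ℕ) {N M : ℕ} (hN : 1 ≤ N) (hM : N ≤ M) :
    ∑ n ∈ Icc 1 (M - N), tripleCoeff 1 k (N + n : ℝ) m n =
      (∑ n ∈ Icc 1 N, pairCoeff k (m : ℝ) n - ∑ n ∈ Ioc (M - N) M, pairCoeff k (m : ℝ) n) / N := by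
  have hN0 : (N : ℝ) ≠ 0 := by positivity
  rw [← sum_Icc_one_sub_shift _ hM, eq_div_iff hN0, sum_mul]
  refine sum_congr rfl fun n hn => ?_
  have hn1 := (mem_Icc.mp hn).1
  rw [mul_comm, mul_tripleCoeff_one_add k (m : ℝ) (by positivity) (by positivity), Nat.cast_add]

theorem two_mul_sum_alternating_tripleCoeff_two (k M : ℕ) :
    2 * ∑ n₁ ∈ Icc 1 M, ∑ n₂ ∈ Ico 1 n₁, ∑ m ∈ Ico 1 n₂,
        (-1) ^ (n₁ + n₂) * tripleCoeff 2 k (n₁ : ℝ) n₂ m =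
      ∑ N ∈ Icc 1 M, ∑ m ∈ Ico 1 N,
          (-1) ^ (N + m) * ((∑ n ∈ Icc 1 N, pairCoeff k (m : ℝ) n) / N) -
        ∑ N ∈ Icc 1 M, ∑ m ∈ Ico 1 N,
          (-1) ^ (N + m) * ((∑ n ∈ Ioc (M - N) M, pairCoeff k (m : ℝ) n) / N) := by
  have hsymm (n₁ n₂ : ℕ) :
      2 * ∑ m ∈ Ico 1 n₂, (-1) ^ (n₁ + n₂) * tripleCoeff 2 k (n₁ : ℝ) n₂ m =
        ∑ m ∈ Ico 1 n₂, (-1) ^ (n₁ + n₂) * tripleCoeff 1 k (n₁ : ℝ) (n₂ - m : ℕ) m := by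
    rw [← mul_sum, ← mul_sum, mul_left_comm, two_mul_sum_tripleCoeff_two]
  rw [mul_sum, sum_congr rfl fun n₁ _ => (mul_sum _ _ _).trans
    (sum_congr rfl fun n₂ _ => hsymm n₁ n₂), sum_alternating_tripleCoeff_one]
  rw [← sum_sub_distrib]
  refine sum_congr rfl fun N hN => ?_
  obtain ⟨hN1, hNM⟩ := mem_Icc.mp hN
  rw [← sum_sub_distrib]
  exact sum_congr rfl fun m _ => by
    rw [← mul_sum, sum_tripleCoeff_one_eq_sub k m hN1 hNM, sub_div, mul_sub]

theorem abs_sum_alternating_pairCoeff_tail_le (k M : ℕ) :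
    |∑ N ∈ Icc 1 M, ∑ m ∈ Ico 1 N,
        (-1) ^ (N + m) * ((∑ n ∈ Ioc (M - N) M, pairCoeff k (m : ℝ) n) / N)| ≤
      (k + 1) * (signedHarmonic 1 M ^ 2 / M) := by
  have hrow : ∀ m ∈ Icc 1 M, |∑ N ∈ Ioc m M,
      (-1) ^ (N + m) * ((∑ n ∈ Ioc (M - N) M, pairCoeff k (m : ℝ) n) / N)| ≤
        (k + 1) * (1 / m) * (signedHarmonic 1 M / M) := by
    intro m hm
    have hm1 : (1 : ℝ) ≤ m := by exact_mod_cast (mem_Icc.mp hm).1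
    have htail := abs_alternating_sum_tail_average_le (φ := fun n : ℕ => pairCoeff k (m : ℝ) n)
      (fun n => pairCoeff_nonneg k m.cast_nonneg n.cast_nonneg)
      (fun n hn n' hn' h => pairCoeff_antitoneOn k m.cast_nonneg
        (Set.mem_Ioi.mpr (Nat.cast_pos.mpr hn)) (Set.mem_Ioi.mpr (Nat.cast_pos.mpr hn'))
        (Nat.cast_le.mpr h)) m M
    have hsum : ∑ n ∈ Icc 1 M, pairCoeff k (m : ℝ) n ≤ (k + 1) * (1 / m) * signedHarmonic 1 M := by
      rw [signedHarmonic_one, mul_sum]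
      refine sum_le_sum fun n hn => ?_
      rw [mul_assoc]
      exact pairCoeff_le k hm1 (by exact_mod_cast (mem_Icc.mp hn).1)
    simp only [add_comm _ m, pow_add, mul_assoc, ← mul_sum]
    rw [abs_mul, abs_pow, abs_neg, abs_one, one_pow, one_mul, ← mul_assoc, ← mul_div_assoc]
    exact htail.trans (by gcongr)
  rw [← sum_Icc_Ioc_comm 1 M]
  calc _ ≤ ∑ m ∈ Icc 1 M, (k + 1) * (1 / (m : ℝ)) * (signedHarmonic 1 M / M) :=
        (abs_sum_le_sum_abs _ _).trans (sum_le_sum hrow)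
    _ = _ := by
        rw [← sum_mul, ← mul_sum, ← signedHarmonic_one]
        ring

end PartialFractions

section DividedDifferences

theorem sum_divided_differences (φ : ℕ → ℝ) (N : ℕ) :
    ∑ m ∈ Ico 1 N, (-1) ^ m * ∑ n ∈ Icc 1 N, (φ m - φ n) / ((n : ℝ) - m) =
      ∑ r ∈ Ico 1 N, (-1) ^ r * φ r * (signedHarmonic 1 (N - r) - signedHarmonic 1 (r - 1)) +
      ∑ r ∈ Icc 1 N, (-1) ^ r * φ r *
        (signedHarmonic (-1) (N - 1 - r) - signedHarmonic (-1) (r - 1)) := by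
  have hsplit (m n : ℕ) : (-1) ^ m * ((φ m - φ n) / ((n : ℝ) - m)) =
      (-1) ^ m * φ m * (1 ^ n / ((n : ℝ) - m)) + φ n * ((-1) ^ m / ((m : ℝ) - n)) := by
    rw [one_pow, ← neg_sub (n : ℝ) m, div_neg]
    ring
  simp only [mul_sum, hsplit, sum_add_distrib]
  congr 1
  · simp only [← mul_sum]
    refine sum_congr rfl fun r hr => ?_
    obtain ⟨hr1, hrN⟩ := mem_Ico.mp hr
    rw [← Ico_add_one_right_eq_Icc, sum_pow_div_sub (N := N + 1) (one_mul 1) hr1 (by lia),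
      one_pow, one_mul, Nat.add_sub_cancel]
  · rw [sum_comm]
    simp only [← mul_sum]
    refine sum_congr rfl fun r hr => ?_
    obtain ⟨hr1, hrN⟩ := mem_Icc.mp hr
    rw [sum_pow_div_sub (by norm_num) hr1 hrN]
    ring

/-- The coefficient of `(-1) ^ r * φ r` in the sum over `m < N ≤ M` and `1 ≤ n ≤ N` of
`(-1) ^ (N + m) / N` times the divided difference `(φ m - φ n) / (n - m)`. -/
noncomputable def residueSum (r M : ℕ) : ℝ :=
  ∑ N ∈ Ioc r M, (-1) ^ N / N * (signedHarmonic 1 (N - r) - signedHarmonic 1 (r - 1)) +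
    ∑ N ∈ Icc r M, (-1) ^ N / N * (signedHarmonic (-1) (N - 1 - r) - signedHarmonic (-1) (r - 1))

theorem sum_alternating_divided_differences (φ : ℕ → ℝ) (M : ℕ) :
    ∑ N ∈ Icc 1 M, (-1) ^ N / N *
        ∑ m ∈ Ico 1 N, (-1) ^ m * ∑ n ∈ Icc 1 N, (φ m - φ n) / ((n : ℝ) - m) =
      ∑ r ∈ Icc 1 M, (-1) ^ r * φ r * residueSum r M := by
  simp only [sum_divided_differences]
  simp only [residueSum, mul_add, sum_add_distrib, mul_sum]
  rw [sum_Icc_Ioc_comm, sum_Icc_Icc_comm]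
  simp only [mul_left_comm ((-1) ^ _ / _ : ℝ)]

theorem pairCoeff_eq_ite_add (k : ℕ) {m n : ℕ} (hm : m ≠ 0) (hn : n ≠ 0) :
    pairCoeff k (m : ℝ) n = (if m = n then (k + 1) / (m : ℝ) ^ (k + 2) else 0) +
      (1 / (m : ℝ) ^ (k + 1) - 1 / (n : ℝ) ^ (k + 1)) / ((n : ℝ) - m) := by
  split_ifs with h
  · rw [← h, pairCoeff_self, sub_self, zero_div, add_zero]
  · rw [zero_add, pairCoeff_of_ne k (Nat.cast_ne_zero.mpr hm) (Nat.cast_ne_zero.mpr hn)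
      (Nat.cast_injective.ne h)]

theorem sum_alternating_pairCoeff (k M : ℕ) :
    ∑ N ∈ Icc 1 M, ∑ m ∈ Ico 1 N,
        (-1) ^ (N + m) * ((∑ n ∈ Icc 1 N, pairCoeff k (m : ℝ) n) / N) =
      (k + 1) * ∑ N ∈ Icc 1 M, ∑ m ∈ Ico 1 N, (-1) ^ N * (-1) ^ m / (N * (m : ℝ) ^ (k + 2)) +
      ∑ r ∈ Icc 1 M, (-1) ^ r * (1 / (r : ℝ) ^ (k + 1)) * residueSum r M := by
  rw [← sum_alternating_divided_differences (fun n => 1 / (n : ℝ) ^ (k + 1)), mul_sum,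
    ← sum_add_distrib]
  refine sum_congr rfl fun N _ => ?_
  rw [mul_sum, mul_sum, ← sum_add_distrib]
  refine sum_congr rfl fun m hm => ?_
  obtain ⟨hm1, hmN⟩ := mem_Ico.mp hm
  have hsum : ∑ n ∈ Icc 1 N, pairCoeff k (m : ℝ) n = (k + 1) / (m : ℝ) ^ (k + 2) +
      ∑ n ∈ Icc 1 N, (1 / (m : ℝ) ^ (k + 1) - 1 / (n : ℝ) ^ (k + 1)) / ((n : ℝ) - m) := by
    rw [sum_congr rfl fun n hn => pairCoeff_eq_ite_add k (Nat.one_le_iff_ne_zero.mp hm1)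
      (Nat.one_le_iff_ne_zero.mp (mem_Icc.mp hn).1), sum_add_distrib, sum_ite_eq,
      if_pos (mem_Icc.mpr ⟨hm1, hmN.le⟩)]
  rw [hsum, pow_add, add_div, mul_add, div_div, mul_comm (N : ℝ)]
  ring

end DividedDifferences

section ResidueAsymptotics

theorem sum_Icc_one_one_div_sub {p M : ℕ} (h : p ≤ M) :
    ∑ j ∈ Icc 1 (M - p), (1 / (j : ℝ) - 1 / (p + j : ℕ)) =
      signedHarmonic 1 p - (signedHarmonic 1 M - signedHarmonic 1 (M - p)) := by
  rw [sum_Icc_one_sub_shift (fun j : ℕ => 1 / (j : ℝ)) h, signedHarmonic_one p,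
    ← sum_Ioc_pow_div 1 (Nat.sub_le M p)]
  simp only [one_pow]

theorem sum_alternating_mul_signedHarmonic_sub_left (s M : ℕ) :
    ∑ N ∈ Ioc s M, (-1) ^ N / N * signedHarmonic (-1) (N - 1 - s) =
      ∑ p ∈ Ioc s M, (-1) ^ p / p *
        (signedHarmonic 1 p - (signedHarmonic 1 M - signedHarmonic 1 (M - p))) := by
  have hterm : ∀ N ∈ Ioc s M, (-1) ^ N / N * signedHarmonic (-1) (N - 1 - s) =
      ∑ j ∈ Ico 1 (N - s), (-1) ^ (N - j + 2 * j) / ((N - j + j : ℕ) * (j : ℝ)) := by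
    intro N hN
    have hsN := (mem_Ioc.mp hN).1
    rw [signedHarmonic, mul_sum, show Icc 1 (N - 1 - s) = Ico 1 (N - s) by ext; simp; lia]
    refine sum_congr rfl fun j hj => ?_
    have hjN : j ≤ N := by simp at hj; lia
    rw [div_mul_div_comm, ← pow_add, Nat.sub_add_cancel hjN]
    congr 2
    lia
  rw [sum_congr rfl hterm,
    sum_Ioc_Ico_sub s M fun p j => (-1 : ℝ) ^ (p + 2 * j) / ((p + j : ℕ) * (j : ℝ))]
  refine sum_congr rfl fun p hp => ?_
  obtain ⟨hsp, hpM⟩ := mem_Ioc.mp hp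
  rw [← sum_Icc_one_one_div_sub hpM, mul_sum]
  refine sum_congr rfl fun j hj => ?_
  have hj0 : (0 : ℝ) < j := Nat.cast_pos.mpr (mem_Icc.mp hj).1
  have hp0 : (0 : ℝ) < p := Nat.cast_pos.mpr (Nat.zero_lt_of_lt hsp)
  rw [pow_add, pow_mul, neg_one_sq, one_pow, Nat.cast_add]
  field_simp
  ring

theorem sum_alternating_mul_signedHarmonic_sub_right (s M : ℕ) :
    ∑ N ∈ Ioc s M, (-1) ^ N / N * signedHarmonic (-1) (M - N) =
      ∑ n ∈ Ioc s M, (-1) ^ n / n *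
        (signedHarmonic 1 (n - 1) - signedHarmonic 1 s + signedHarmonic 1 (n - 1 - s)) := by
  have hA (N : ℕ) : signedHarmonic (-1) (M - N) = ∑ j ∈ Icc 1 (M - N), (-1) ^ j / (j : ℝ) := rfl
  simp only [hA, mul_sum]
  rw [← sum_Ioc_Ico_sub s M fun N j => (-1 : ℝ) ^ N / N * ((-1) ^ j / j)]
  refine sum_congr rfl fun n hn => ?_
  have hsn := (mem_Ioc.mp hn).1
  have hreflect : signedHarmonic 1 (n - 1) - signedHarmonic 1 s =
      ∑ j ∈ Ico 1 (n - s), 1 / ((n - j : ℕ) : ℝ) := by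
    rw [← sum_Ioc_pow_div 1 (by lia)]
    exact sum_nbij' (n - ·) (n - ·) (by simp; lia) (by simp; lia) (by simp; lia) (by simp; lia)
      fun j hj => by rw [one_pow, Nat.sub_sub_self (by simp at hj; lia)]
  rw [hreflect, signedHarmonic_one, show Icc 1 (n - 1 - s) = Ico 1 (n - s) by ext; simp; lia,
    ← sum_add_distrib, mul_sum]
  refine sum_congr rfl fun j hj => ?_
  obtain ⟨hj1, hjn⟩ := mem_Ico.mp hj
  have hnj0 : (0 : ℝ) < (n - j : ℕ) := Nat.cast_pos.mpr (by lia)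
  have hn : (n : ℝ) = (n - j : ℕ) + j := by exact_mod_cast (Nat.sub_add_cancel (by lia)).symm
  rw [div_mul_div_comm, ← pow_add, Nat.sub_add_cancel (by lia), hn]
  field_simp
  ring

theorem residueSum_eq {r M : ℕ} (hr : 1 ≤ r) (hM : r ≤ M) :
    residueSum r M =
      (∑ n ∈ Icc r M, (-1) ^ n / (n : ℝ)) ^ 2 + ∑ n ∈ Ioc r M, (-1) ^ n / (n : ℝ) ^ 2 -
        (∑ p ∈ Ioc r M, (-1) ^ p / p * (signedHarmonic 1 M - signedHarmonic 1 (M - p)) +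
          ∑ N ∈ Icc r M,
            (-1) ^ N / N * (signedHarmonic (-1) M - signedHarmonic (-1) (M - N))) := by
  have hIcc : Icc r M = Ioc (r - 1) M := by ext; simp; lia
  have hA : ∑ n ∈ Icc r M, (-1) ^ n / (n : ℝ) =
      signedHarmonic (-1) M - signedHarmonic (-1) (r - 1) := by
    rw [hIcc, sum_Ioc_pow_div _ (by lia)]
  have hleft : ∑ N ∈ Icc r M, (-1) ^ N / N * signedHarmonic (-1) (N - 1 - r) =
      ∑ p ∈ Ioc r M, (-1) ^ p / p *
        (signedHarmonic 1 p - (signedHarmonic 1 M - signedHarmonic 1 (M - p))) := by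
    rw [← add_sum_Ioc_eq_sum_Icc hM, ← sum_alternating_mul_signedHarmonic_sub_left]
    simp [signedHarmonic, show r - 1 - r = 0 by lia]
  have hright : ∑ N ∈ Icc r M, (-1) ^ N / N * signedHarmonic (-1) (M - N) =
      ∑ n ∈ Ioc r M, (-1) ^ n / n *
        (signedHarmonic 1 (n - 1) - signedHarmonic 1 (r - 1) + signedHarmonic 1 (n - r)) := by
    rw [hIcc, sum_alternating_mul_signedHarmonic_sub_right, ← hIcc, ← add_sum_Ioc_eq_sum_Icc hM]
    simp only [show ∀ n, n - 1 - (r - 1) = n - r by lia]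
    simp [signedHarmonic]
  have hdiag : ∑ n ∈ Ioc r M, (-1) ^ n / (n : ℝ) ^ 2 =
      ∑ n ∈ Ioc r M, (-1) ^ n / n * (signedHarmonic 1 n - signedHarmonic 1 (n - 1)) := by
    refine sum_congr rfl fun n hn => ?_
    obtain ⟨i, rfl⟩ : ∃ i, n = i + 1 := ⟨n - 1, by simp at hn; lia⟩
    rw [signedHarmonic_succ, Nat.add_sub_cancel, add_sub_cancel_left, one_pow, sq, div_mul_div_comm,
      mul_one]
  simp only [residueSum, mul_sub, mul_add, sum_sub_distrib, sum_add_distrib, ← sum_mul]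
    at hleft hright hdiag ⊢
  rw [hA]
  linear_combination hleft - hright - hdiag

theorem sum_one_div_mul_one_div_reflect (n : ℕ) :
    ∑ N ∈ Ico 1 n, 1 / (N : ℝ) * (1 / (n - N : ℕ)) = 2 / n * signedHarmonic 1 (n - 1) := by
  have hterm : ∀ N ∈ Ico 1 n, 1 / (N : ℝ) * (1 / (n - N : ℕ)) =
      1 / n * (1 / N + 1 / (n - N : ℕ)) := by
    intro N hN
    obtain ⟨hN1, hNn⟩ := mem_Ico.mp hN
    have hnN0 : (0 : ℝ) < (n - N : ℕ) := Nat.cast_pos.mpr (by lia)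
    have hn : (n : ℝ) = (n - N : ℕ) + N := by exact_mod_cast (Nat.sub_add_cancel (by lia)).symm
    rw [hn]
    field_simp
  rw [sum_congr rfl hterm, ← mul_sum, sum_add_distrib,
    sum_Ico_one_reflect (fun j => 1 / (j : ℝ)), signedHarmonic_one,
    show Icc 1 (n - 1) = Ico 1 n by ext; simp; lia]
  ring

theorem antitoneOn_one_div_natCast : AntitoneOn (fun n : ℕ => 1 / (n : ℝ)) (Set.Ici 1) :=
  fun _ hm _ _ h => one_div_le_one_div_of_le (Nat.cast_pos.mpr hm) (Nat.cast_le.mpr h)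

theorem abs_sum_alternating_mul_harmonic_tail_le (r M : ℕ) :
    |∑ p ∈ Ioc r M, (-1) ^ p / p * (signedHarmonic 1 M - signedHarmonic 1 (M - p))| ≤
      signedHarmonic 1 M / M := by
  have htail := abs_alternating_sum_tail_average_le (φ := fun n : ℕ => 1 / (n : ℝ))
    (fun n => by positivity) antitoneOn_one_div_natCast r M
  rw [← signedHarmonic_one] at htail
  simp only [← sum_Ioc_pow_div 1 (Nat.sub_le M _), one_pow, div_mul_eq_mul_div, mul_div_assoc]
  exact htail

theorem abs_sum_alternating_mul_alternating_tail_le {r M : ℕ} (hr : 1 ≤ r) :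
    |∑ N ∈ Icc r M, (-1) ^ N / N * (signedHarmonic (-1) M - signedHarmonic (-1) (M - N))| ≤
      2 * (signedHarmonic 1 M / M) := by
  have hterm : ∀ N ∈ Icc r M,
      |(-1) ^ N / N * (signedHarmonic (-1) M - signedHarmonic (-1) (M - N))| ≤
        1 / (N : ℝ) * (1 / (M + 1 - N : ℕ)) := by
    intro N hN
    obtain ⟨hrN, hNM⟩ := mem_Icc.mp hN
    have htail := abs_alternating_sum_le_of_antitoneOn (d := fun n : ℕ => 1 / (n : ℝ))
      (fun n _ => by positivity)
      (antitoneOn_one_div_natCast.mono fun n hn => Nat.one_le_of_lt hn.1)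
      (show M - N < M by lia)
    rw [← sum_Ioc_pow_div _ (Nat.sub_le M N), abs_mul, abs_div, abs_pow, abs_neg, abs_one, one_pow,
      Nat.abs_cast, Nat.sub_add_comm hNM]
    simp only [mul_one_div] at htail
    gcongr
  calc _ ≤ ∑ N ∈ Icc r M, 1 / (N : ℝ) * (1 / (M + 1 - N : ℕ)) :=
        (abs_sum_le_sum_abs _ _).trans (sum_le_sum hterm)
    _ ≤ ∑ N ∈ Ico 1 (M + 1), 1 / (N : ℝ) * (1 / (M + 1 - N : ℕ)) :=
        sum_le_sum_of_subset_of_nonneg (Icc_subset_Icc_left hr) fun _ _ _ => by positivity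
    _ ≤ _ := by
        rw [sum_one_div_mul_one_div_reflect, Nat.add_sub_cancel, div_mul_eq_mul_div,
          mul_div_assoc]
        have hH := signedHarmonic_one_nonneg M
        rcases M.eq_zero_or_pos with rfl | hM
        · simp [signedHarmonic]
        · gcongr
          lia

theorem abs_residueSum_sub_le {r M : ℕ} (hr : 1 ≤ r) (hM : r ≤ M) :
    |residueSum r M -
        ((∑ n ∈ Icc r M, (-1) ^ n / (n : ℝ)) ^ 2 + ∑ n ∈ Ioc r M, (-1) ^ n / (n : ℝ) ^ 2)| ≤
      3 * (signedHarmonic 1 M / M) := by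
  rw [residueSum_eq hr hM, sub_sub_cancel_left, abs_neg]
  exact (abs_add_le _ _).trans (by
    linarith [abs_sum_alternating_mul_harmonic_tail_le r M,
      abs_sum_alternating_mul_alternating_tail_le (M := M) hr])

end ResidueAsymptotics

section PartialSums

/-- The truncation of the Euler sum `ζ(s; e)` to summation indices at most `N`. -/
noncomputable def eulerPartialSum1 (s : ℕ) (e : ℝ) (N : ℕ) : ℝ :=
  ∑ n ∈ Icc 1 N, e ^ n / (n : ℝ) ^ s

/-- The truncation of the Euler sum `ζ(s₁, s₂; e₁, e₂)` to summation indices at most `N`. -/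
noncomputable def eulerPartialSum2 (s₁ s₂ : ℕ) (e₁ e₂ : ℝ) (N : ℕ) : ℝ :=
  ∑ n₁ ∈ Icc 1 N, ∑ n₂ ∈ Ico 1 n₁, e₁ ^ n₁ * e₂ ^ n₂ / ((n₁ : ℝ) ^ s₁ * (n₂ : ℝ) ^ s₂)

/-- The truncation of the Euler sum `ζ(s₁, s₂, s₃; e₁, e₂, e₃)` to summation indices at most `N`. -/
noncomputable def eulerPartialSum3 (s₁ s₂ s₃ : ℕ) (e₁ e₂ e₃ : ℝ) (N : ℕ) : ℝ :=
  ∑ n₁ ∈ Icc 1 N, ∑ n₂ ∈ Ico 1 n₁, ∑ n₃ ∈ Ico 1 n₂,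
    e₁ ^ n₁ * e₂ ^ n₂ * e₃ ^ n₃ / ((n₁ : ℝ) ^ s₁ * (n₂ : ℝ) ^ s₂ * (n₃ : ℝ) ^ s₃)

theorem eulerPartialSum2_eq_sum_mul_sum (s₁ s₂ : ℕ) (e₁ e₂ : ℝ) (N : ℕ) :
    eulerPartialSum2 s₁ s₂ e₁ e₂ N =
      ∑ r ∈ Icc 1 N, e₂ ^ r / (r : ℝ) ^ s₂ * ∑ n ∈ Ioc r N, e₁ ^ n / (n : ℝ) ^ s₁ := by
  rw [eulerPartialSum2, ← sum_Icc_Ioc_comm]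
  simp only [mul_sum, mul_comm (e₁ ^ _), mul_comm ((_ : ℝ) ^ s₁), div_mul_div_comm]

theorem eulerPartialSum3_eq_sum_mul_sum (s₁ s₂ s₃ : ℕ) (e₁ e₂ e₃ : ℝ) (N : ℕ) :
    eulerPartialSum3 s₁ s₂ s₃ e₁ e₂ e₃ N =
      ∑ r ∈ Icc 1 N, e₃ ^ r / (r : ℝ) ^ s₃ *
        ∑ n ∈ Ioc r N, ∑ m ∈ Ioo r n, e₁ ^ n / (n : ℝ) ^ s₁ * (e₂ ^ m / (m : ℝ) ^ s₂) := by
  simp only [eulerPartialSum3, ← sum_Ico_Ico_comm' 1, Ico_add_one_left_eq_Ioo]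
  rw [← sum_Icc_Ioc_comm]
  refine sum_congr rfl fun r _ => ?_
  simp only [mul_sum, div_mul_div_comm]
  simp only [mul_comm (e₃ ^ r), mul_comm ((r : ℝ) ^ s₃)]

theorem sum_alternating_mul_sq_add (s M : ℕ) :
    ∑ r ∈ Icc 1 M, (-1) ^ r * (1 / (r : ℝ) ^ s) *
        ((∑ n ∈ Icc r M, (-1) ^ n / (n : ℝ)) ^ 2 + ∑ n ∈ Ioc r M, (-1) ^ n / (n : ℝ) ^ 2) =
      2 * eulerPartialSum3 1 1 s (-1) (-1) (-1) M + 2 * eulerPartialSum2 1 (s + 1) (-1) 1 M +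
        eulerPartialSum2 2 s (-1) (-1) M + eulerPartialSum2 2 s 1 (-1) M +
        eulerPartialSum1 (s + 2) (-1) M := by
  simp only [eulerPartialSum3_eq_sum_mul_sum, eulerPartialSum2_eq_sum_mul_sum, eulerPartialSum1,
    mul_sum _ _ (2 : ℝ), ← sum_add_distrib]
  refine sum_congr rfl fun r hr => ?_
  have hrM := (mem_Icc.mp hr).2
  have hsq (n : ℕ) : ((-1 : ℝ) ^ n) ^ 2 = 1 := by rw [← pow_mul, mul_comm, pow_mul]; simp
  rw [← add_sum_Ioc_eq_sum_Icc hrM, add_sq, sq_sum_Ioc]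
  simp only [div_pow, hsq, one_pow, pow_one]
  rw [pow_succ, pow_add, div_mul_eq_div_div, div_mul_eq_div_div]
  linear_combination (2 / r ^ s / r * ∑ n ∈ Ioc r M, (-1 : ℝ) ^ n / n) * hsq r

theorem sum_eulerPartialSum3_eq_sum_tripleCoeff (t : ℝ) (k M : ℕ) :
    ∑ p ∈ antidiagonal k, ∑ q ∈ antidiagonal p.2,
        t ^ q.1 * eulerPartialSum3 (p.1 + 1) (q.1 + 1) (q.2 + 1) (-1) (-1) 1 M =
      ∑ n₁ ∈ Icc 1 M, ∑ n₂ ∈ Ico 1 n₁, ∑ m ∈ Ico 1 n₂,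
        (-1) ^ (n₁ + n₂) * tripleCoeff t k (n₁ : ℝ) n₂ m := by
  simp only [tripleCoeff_eq_sum, eulerPartialSum3, mul_sum]
  symm
  rw [sum_congr rfl fun n₁ _ => (sum_congr rfl fun n₂ _ => sum_sum_sum_rotate _ _ _ _).trans
    (sum_sum_sum_rotate _ _ _ _), sum_sum_sum_rotate]
  simp only [one_pow, mul_one, pow_add (-1 : ℝ) _ _, mul_div_left_comm]

theorem two_mul_sum_eulerPartialSum3 (k M : ℕ) :
    2 * ∑ p ∈ antidiagonal k, ∑ q ∈ antidiagonal p.2,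
        2 ^ q.1 * eulerPartialSum3 (p.1 + 1) (q.1 + 1) (q.2 + 1) (-1) (-1) 1 M =
      (k + 1) * eulerPartialSum2 1 (k + 2) (-1) (-1) M +
        ∑ r ∈ Icc 1 M, (-1) ^ r * (1 / (r : ℝ) ^ (k + 1)) * residueSum r M -
        ∑ N ∈ Icc 1 M, ∑ m ∈ Ico 1 N,
          (-1) ^ (N + m) * ((∑ n ∈ Ioc (M - N) M, pairCoeff k (m : ℝ) n) / N) := by
  rw [sum_eulerPartialSum3_eq_sum_tripleCoeff, two_mul_sum_alternating_tripleCoeff_two,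
    sum_alternating_pairCoeff]
  simp only [eulerPartialSum2, pow_one]

theorem abs_weighted_eulerPartialSum3_sub_le (k M : ℕ) :
    |2 * ∑ p ∈ antidiagonal k, ∑ q ∈ antidiagonal p.2,
          2 ^ q.1 * eulerPartialSum3 (p.1 + 1) (q.1 + 1) (q.2 + 1) (-1) (-1) 1 M -
        (2 * eulerPartialSum3 1 1 (k + 1) (-1) (-1) (-1) M +
          (k + 1) * eulerPartialSum2 1 (k + 2) (-1) (-1) M +
          2 * eulerPartialSum2 1 (k + 2) (-1) 1 M + eulerPartialSum2 2 (k + 1) (-1) (-1) M +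
          eulerPartialSum2 2 (k + 1) 1 (-1) M + eulerPartialSum1 (k + 3) (-1) M)| ≤
      (k + 4) * (signedHarmonic 1 M ^ 2 / M) := by
  have hresidue : |∑ r ∈ Icc 1 M, (-1) ^ r * (1 / (r : ℝ) ^ (k + 1)) * (residueSum r M -
      ((∑ n ∈ Icc r M, (-1) ^ n / (n : ℝ)) ^ 2 + ∑ n ∈ Ioc r M, (-1) ^ n / (n : ℝ) ^ 2))| ≤
        3 * (signedHarmonic 1 M ^ 2 / M) := by
    calc _ ≤ ∑ r ∈ Icc 1 M, 1 / (r : ℝ) * (3 * (signedHarmonic 1 M / M)) := by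
          refine (abs_sum_le_sum_abs _ _).trans (sum_le_sum fun r hr => ?_)
          obtain ⟨hr1, hrM⟩ := mem_Icc.mp hr
          have hr1' : (1 : ℝ) ≤ r := Nat.one_le_cast.mpr hr1
          rw [abs_mul, abs_mul, abs_pow, abs_neg, abs_one, one_pow, one_mul,
            abs_of_nonneg (by positivity)]
          gcongr
          · exact le_self_pow₀ hr1' k.succ_ne_zero
          · exact abs_residueSum_sub_le hr1 hrM
      _ = _ := by
          rw [← sum_mul, ← signedHarmonic_one]
          ring
  have htarget := sum_alternating_mul_sq_add (k + 1) M
  have htail := abs_sum_alternating_pairCoeff_tail_le k M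
  simp only [mul_sub, sum_sub_distrib, htarget] at hresidue
  rw [two_mul_sum_eulerPartialSum3]
  rw [abs_le] at hresidue htail ⊢
  constructor <;> linarith

end PartialSums

section Convergence

theorem exists_tendsto_sum_Icc_one {f : ℕ → ℝ} (hf : Summable f) :
    ∃ l, Tendsto (fun N : ℕ => ∑ n ∈ Icc 1 N, f n) atTop (𝓝 l) := by
  simp only [← Ico_add_one_right_eq_Icc, sum_Ico_eq_sum_range, Nat.add_sub_cancel, add_comm 1]
  exact ⟨_, ((summable_nat_add_iff 1).mpr hf).hasSum.tendsto_sum_nat⟩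

theorem exists_tendsto_alternating_sum {f : ℕ → ℝ} (hf : Tendsto f atTop (𝓝 0))
    (hvar : Summable fun n => |f (n + 1) - f n|) :
    ∃ l, Tendsto (fun N : ℕ => ∑ n ∈ Icc 1 N, (-1) ^ n * f n) atTop (𝓝 l) := by
  have habel (N : ℕ) : ∑ n ∈ Icc 1 N, (-1) ^ n * f n =
      (∑ n ∈ Icc 1 N, (-1) ^ n * (f n - f (n + 1)) - f 1 + (-1) ^ N * f (N + 1)) / 2 := by
    induction N with
    | zero => simp
    | succ N ih =>
      rw [sum_Icc_succ_top (Nat.le_add_left 1 N), sum_Icc_succ_top (Nat.le_add_left 1 N), ih]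
      ring
  obtain ⟨l, hl⟩ := exists_tendsto_sum_Icc_one (f := fun n => (-1) ^ n * (f n - f (n + 1)))
    (.of_norm_bounded hvar fun n => by simp [abs_sub_comm])
  have hboundary : Tendsto (fun N : ℕ => (-1) ^ N * f (N + 1)) atTop (𝓝 0) :=
    squeeze_zero_norm (a := fun N => |f (N + 1)|) (fun N => by simp)
      (by simpa using ((tendsto_add_atTop_iff_nat 1).mpr hf).abs)
  simp only [habel]
  exact ⟨_, ((hl.sub_const _).add hboundary).div_const 2⟩

theorem abs_div_add_one_sub_div_le {B B' H : ℝ} {n : ℕ} (hn : 1 ≤ n) (hH : 1 ≤ H)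
    (hB : |B| ≤ H ^ 2) (hstep : |B' - B| ≤ H / n) :
    |B' / (n + 1 : ℕ) - B / n| ≤ 2 * (H ^ 2 / (n : ℝ) ^ 2) := by
  have hn1 : (n : ℝ) ≤ n + 1 := by linarith
  have hsplit : B' / (n + 1 : ℕ) - B / n = (B' - B) / (n + 1) - B / (n * (n + 1)) := by
    push_cast
    field_simp
    ring
  have hfirst : |(B' - B) / (n + 1 : ℝ)| ≤ H ^ 2 / (n : ℝ) ^ 2 := by
    rw [abs_div, abs_of_pos (by positivity : (0 : ℝ) < n + 1), sq (n : ℝ), ← div_div]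
    have hHsq : H ≤ H ^ 2 := le_self_pow₀ hH two_ne_zero
    calc _ ≤ H / n / n := by gcongr
      _ ≤ H ^ 2 / n / n := by gcongr
  have hsecond : |B / (n * (n + 1 : ℝ))| ≤ H ^ 2 / (n : ℝ) ^ 2 := by
    rw [abs_div, abs_of_pos (by positivity : (0 : ℝ) < n * (n + 1)), sq (n : ℝ)]
    gcongr
  rw [hsplit, two_mul]
  exact (abs_sub _ _).trans (add_le_add hfirst hsecond)

theorem abs_sum_Ico_one_le_signedHarmonic_one_sq {c : ℕ → ℝ}
    (hc : ∀ n, 1 ≤ n → |c n| ≤ signedHarmonic 1 n / n) (N : ℕ) :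
    |∑ n ∈ Ico 1 N, c n| ≤ signedHarmonic 1 N ^ 2 := by
  calc _ ≤ ∑ n ∈ Ico 1 N, signedHarmonic 1 N * (1 / (n : ℝ)) := by
        refine (abs_sum_le_sum_abs _ _).trans (sum_le_sum fun n hn => ?_)
        obtain ⟨hn1, hnN⟩ := mem_Ico.mp hn
        rw [mul_one_div]
        exact (hc n hn1).trans (by gcongr; exact signedHarmonic_one_mono hnN.le)
    _ ≤ ∑ n ∈ Icc 1 N, signedHarmonic 1 N * (1 / (n : ℝ)) :=
        sum_le_sum_of_subset_of_nonneg Ico_subset_Icc_self fun _ _ _ =>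
          mul_nonneg (signedHarmonic_one_nonneg N) (by positivity)
    _ = _ := by rw [← mul_sum, ← signedHarmonic_one, sq]

theorem exists_tendsto_alternating_sum_div {c : ℕ → ℝ}
    (hc : ∀ n, 1 ≤ n → |c n| ≤ signedHarmonic 1 n / n) :
    ∃ l, Tendsto (fun N : ℕ => ∑ n ∈ Icc 1 N, (-1) ^ n * ((∑ m ∈ Ico 1 n, c m) / n))
      atTop (𝓝 l) := by
  have hB := abs_sum_Ico_one_le_signedHarmonic_one_sq hc
  refine exists_tendsto_alternating_sum (f := fun n => (∑ m ∈ Ico 1 n, c m) / n) ?_ ?_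
  · refine squeeze_zero_norm (fun n => ?_) tendsto_signedHarmonic_one_sq_div
    rw [Real.norm_eq_abs, abs_div, Nat.abs_cast]
    gcongr
    exact hB n
  · refine .of_nonneg_of_le (fun n => abs_nonneg _) (fun n => ?_)
      (summable_signedHarmonic_one_sq_div_sq.mul_left 2)
    rcases n.eq_zero_or_pos with rfl | hn
    · simp
    · refine abs_div_add_one_sub_div_le hn (one_le_signedHarmonic_one hn) (hB n) ?_
      rw [sum_Ico_succ_top hn, add_sub_cancel_left]
      exact hc n hn

theorem exists_tendsto_sum_pow_mul_div {c : ℕ → ℝ} {e : ℝ} {a : ℕ}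
    (hc : ∀ n, 1 ≤ n → |c n| ≤ signedHarmonic 1 n / n) (he : |e| = 1) (ha : 1 ≤ a)
    (hconv : 2 ≤ a ∨ e = -1) :
    ∃ l, Tendsto (fun N : ℕ => ∑ n ∈ Icc 1 N, e ^ n * ((∑ m ∈ Ico 1 n, c m) / (n : ℝ) ^ a))
      atTop (𝓝 l) := by
  rcases ha.eq_or_lt with rfl | ha
  · obtain rfl : e = -1 := hconv.resolve_left (by norm_num)
    simpa only [pow_one] using exists_tendsto_alternating_sum_div hc
  · refine exists_tendsto_sum_Icc_one
      (.of_norm_bounded summable_signedHarmonic_one_sq_div_sq fun n => ?_)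
    rw [norm_mul, norm_pow, Real.norm_eq_abs, he, one_pow, one_mul, Real.norm_eq_abs, abs_div,
      abs_pow, Nat.abs_cast]
    rcases n.eq_zero_or_pos with rfl | hn
    · simp
    · have hn1 : (1 : ℝ) ≤ n := Nat.one_le_cast.mpr hn
      gcongr
      · exact abs_sum_Ico_one_le_signedHarmonic_one_sq hc n
      · exact ha

theorem abs_pow_div_le {e : ℝ} (he : |e| = 1) {s : ℕ} (hs : 1 ≤ s) {n : ℕ} (hn : 1 ≤ n) :
    |e ^ n / (n : ℝ) ^ s| ≤ 1 / n := by
  rw [abs_div, abs_pow, he, one_pow, abs_pow, Nat.abs_cast]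
  exact one_div_le_one_div_of_le (Nat.cast_pos.mpr hn)
    (le_self_pow₀ (Nat.one_le_cast.mpr hn) (Nat.one_le_iff_ne_zero.mp hs))

theorem tendsto_eulerPartialSum1 {s : ℕ} {e : ℝ} (hs : 2 ≤ s) (he : |e| = 1) :
    Tendsto (eulerPartialSum1 s e) atTop (𝓝 (eulerSum1 s e)) := by
  refine tendsto_nhds_limUnder (exists_tendsto_sum_Icc_one
    (.of_norm_bounded (Real.summable_one_div_nat_pow.mpr hs) fun n => ?_))
  rw [Real.norm_eq_abs, abs_div, abs_pow, he, one_pow, abs_pow, Nat.abs_cast]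

theorem tendsto_eulerPartialSum2 {s₁ s₂ : ℕ} {e₁ e₂ : ℝ} (hs₁ : 1 ≤ s₁) (hs₂ : 1 ≤ s₂)
    (he₁ : |e₁| = 1) (he₂ : |e₂| = 1) (hconv : 2 ≤ s₁ ∨ e₁ = -1) :
    Tendsto (eulerPartialSum2 s₁ s₂ e₁ e₂) atTop (𝓝 (eulerSum2 s₁ s₂ e₁ e₂)) := by
  have hc (n : ℕ) (hn : 1 ≤ n) : |e₂ ^ n / (n : ℝ) ^ s₂| ≤ signedHarmonic 1 n / n :=
    (abs_pow_div_le he₂ hs₂ hn).trans (by gcongr; exact one_le_signedHarmonic_one hn)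
  obtain ⟨l, hl⟩ := exists_tendsto_sum_pow_mul_div hc he₁ hs₁ hconv
  refine tendsto_nhds_limUnder ⟨l, hl.congr fun N => ?_⟩
  simp only [eulerPartialSum2, sum_div, mul_sum, div_div, mul_div_assoc', mul_comm ((_ : ℝ) ^ s₂)]

theorem tendsto_eulerPartialSum3 {s₁ s₂ s₃ : ℕ} {e₁ e₂ e₃ : ℝ} (hs₁ : 1 ≤ s₁) (hs₂ : 1 ≤ s₂)
    (hs₃ : 1 ≤ s₃) (he₁ : |e₁| = 1) (he₂ : |e₂| = 1) (he₃ : |e₃| = 1)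
    (hconv : 2 ≤ s₁ ∨ e₁ = -1) :
    Tendsto (eulerPartialSum3 s₁ s₂ s₃ e₁ e₂ e₃) atTop (𝓝 (eulerSum3 s₁ s₂ s₃ e₁ e₂ e₃)) := by
  have hinner (n : ℕ) : |∑ m ∈ Ico 1 n, e₃ ^ m / (m : ℝ) ^ s₃| ≤ signedHarmonic 1 n := by
    rw [signedHarmonic_one]
    exact (abs_sum_le_sum_abs _ _).trans ((sum_le_sum fun m hm =>
      abs_pow_div_le he₃ hs₃ (mem_Ico.mp hm).1).trans
        (sum_le_sum_of_subset_of_nonneg Ico_subset_Icc_self fun _ _ _ => by positivity))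
  have hc (n : ℕ) (hn : 1 ≤ n) :
      |e₂ ^ n / (n : ℝ) ^ s₂ * ∑ m ∈ Ico 1 n, e₃ ^ m / (m : ℝ) ^ s₃| ≤ signedHarmonic 1 n / n := by
    rw [abs_mul, ← one_div_mul_eq_div (n : ℝ)]
    exact mul_le_mul (abs_pow_div_le he₂ hs₂ hn) (hinner n) (abs_nonneg _) (by positivity)
  obtain ⟨l, hl⟩ := exists_tendsto_sum_pow_mul_div hc he₁ hs₁ hconv
  refine tendsto_nhds_limUnder ⟨l, hl.congr fun N => ?_⟩
  simp only [eulerPartialSum3, sum_div, mul_sum, mul_div_assoc']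
  refine sum_congr rfl fun n₁ _ => sum_congr rfl fun n₂ _ => sum_congr rfl fun n₃ _ => ?_
  field_simp

end Convergence

theorem weighted_sum_triple_barbar_unbar_general (k : ℕ) :
    2 * ∑ p ∈ antidiagonal k, ∑ q ∈ antidiagonal p.2,
        2 ^ q.1 * eulerSum3 (p.1 + 1) (q.1 + 1) (q.2 + 1) (-1) (-1) 1 =
      2 * eulerSum3 1 1 (k + 1) (-1) (-1) (-1) + (k + 1) * eulerSum2 1 (k + 2) (-1) (-1) +
        2 * eulerSum2 1 (k + 2) (-1) 1 + eulerSum2 2 (k + 1) (-1) (-1) +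
        eulerSum2 2 (k + 1) 1 (-1) + eulerSum1 (k + 3) (-1) := by
  have hneg : |(-1 : ℝ)| = 1 := by simp
  have hleft := (tendsto_finsetSum (antidiagonal k) fun p _ =>
    tendsto_finsetSum (antidiagonal p.2) fun q _ => (tendsto_eulerPartialSum3
      p.1.succ_pos q.1.succ_pos q.2.succ_pos hneg hneg abs_one (.inr rfl)).const_mul
        (2 ^ q.1)).const_mul 2
  have htriple := tendsto_eulerPartialSum3 le_rfl le_rfl k.succ_pos hneg hneg hneg (.inr rfl)
  have hdouble {s₁ s₂ : ℕ} {e₁ e₂ : ℝ} := tendsto_eulerPartialSum2 (s₁ := s₁) (s₂ := s₂)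
    (e₁ := e₁) (e₂ := e₂)
  have hright := (((((htriple.const_mul 2).add
    ((hdouble le_rfl (k + 1).succ_pos hneg hneg (.inr rfl)).const_mul ((k : ℝ) + 1))).add
    ((hdouble le_rfl (k + 1).succ_pos hneg abs_one (.inr rfl)).const_mul 2)).add
    (hdouble one_le_two k.succ_pos hneg hneg (.inr rfl))).add
    (hdouble one_le_two k.succ_pos abs_one hneg (.inl le_rfl))).add
    (tendsto_eulerPartialSum1 (Nat.le_add_left 2 (k + 1)) hneg)
  have herror := tendsto_signedHarmonic_one_sq_div.const_mul ((k : ℝ) + 4)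
  rw [mul_zero] at herror
  exact sub_eq_zero.mp (tendsto_nhds_unique (hleft.sub hright)
    (squeeze_zero_norm (abs_weighted_eulerPartialSum3_sub_le k) herror))

end

/-- For `w ≥ 4`, with `u = w − 2`, `v = w − 1`:
`2 ∑_{a+b+c=w} 2^{b−1} ζ(ā,b̄,c)
  = 2 ζ(1̄,1̄,ū) + u ζ(1̄,v̄) + 2 ζ(1̄,v) + ζ(2̄,ū) + ζ(2,ū) + ζ(w̄)`. -/
theorem weighted_sum_triple_barbar_unbar (w : ℕ) (hw : 4 ≤ w) :
    2 * ∑ a ∈ Finset.Icc 1 (w - 2), ∑ b ∈ Finset.Icc 1 (w - a - 1),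
        (2 : ℝ) ^ (b - 1) * eulerSum3 a b (w - a - b) (-1) (-1) 1
      = 2 * eulerSum3 1 1 (w - 2) (-1) (-1) (-1)
        + ((w : ℝ) - 2) * eulerSum2 1 (w - 1) (-1) (-1)
        + 2 * eulerSum2 1 (w - 1) (-1) 1
        + eulerSum2 2 (w - 2) (-1) (-1) + eulerSum2 2 (w - 2) 1 (-1)
        + eulerSum1 w (-1) := by
  obtain ⟨k, rfl⟩ : ∃ k, w = k + 3 := ⟨w - 3, by lia⟩
  have hreindex := sum_Icc_Icc_one_eq_sum_antidiagonal
    (fun a b c => (2 : ℝ) ^ (b - 1) * eulerSum3 a b c (-1) (-1) 1) k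
  have hcast : ((k + 3 : ℕ) : ℝ) - 2 = k + 1 := by push_cast; ring
  rw [hcast]
  exact (congrArg ((2 : ℝ) * ·) hreindex).trans (weighted_sum_triple_barbar_unbar_general k)
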